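/- Let {x^k} be generated by the conditional gradient method with Armijo rule: x⁰ ∈ D; for each k, y^k ∈ Z(x^k), d^k = y^k − x^k with ⟨f'(x^k), d^k⟩ < 0, λ_k = θ^{m_k} where m_k is the smallest m ∈ ℤ₊ with f(x^k + θ^m d^k) ≤ f(x^k) + β θ^m ⟨f'(x^k), d^k⟩, and x^{k+1} = x^k + λ_k d^k, where β, θ ∈ (0,1). Then {x^k} has limit points and every limit point of {x^k} belongs to D⁰. -/

import Mathlib

open Filter RealInnerProductSpace

/-!
Write `g k = ⟪f' (x k), y k - x k⟫ < 0`. Since `D` is compact, `f'` is uniformly continuous on `D`,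
so every step `0 < t ≤ min 1 δ` passes the Armijo test as soon as the slope is at most `-c`, with `δ`
depending on `c` only (`armijo_of_small_step`). Backtracking therefore accepts a step of at least
`min 1 (θ δ)` whenever `g k ≤ -c`, which lowers `f` by at least a fixed amount. As `f (x k)` is
decreasing and bounded below, this happens only finitely often for each `c > 0`, hence `g k → 0`. For `u ∈ D` we
have `g k ≤ ⟪f' (x k), u - x k⟫` by the choice of `y k`; passing to the limit along a
convergent subsequence gives stationarity.
-/

/-- For slopes bounded away from zero, the Armijo inequality holds for all small steps, uniformly
over a compact convex set. -/
lemma armijo_of_small_step {E : Type*} [NormedAddCommGroup E] [InnerProductSpace ℝ E]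
    [CompleteSpace E] {D : Set E} (hDconv : Convex ℝ D) (hDcomp : IsCompact D)
    {f : E → ℝ} {f' : E → E} (hf : ∀ x ∈ D, HasGradientAt f (f' x) x) (hf' : ContinuousOn f' D)
    {β c : ℝ} (hβ : β < 1) (hc : 0 < c) :
    ∃ δ > 0, ∀ x ∈ D, ∀ y ∈ D, ∀ t : ℝ, 0 < t → t ≤ 1 → t ≤ δ → ⟪f' x, y - x⟫ ≤ -c →
      f (x + t • (y - x)) ≤ f x + β * t * ⟪f' x, y - x⟫ := by
  obtain ⟨M, hM⟩ := hDcomp.isBounded.exists_norm_le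
  -- `R` bounds the norm of every difference of two points of `D`.
  obtain ⟨R, hR, hdR⟩ : ∃ R > 0, ∀ x ∈ D, ∀ y ∈ D, ‖y - x‖ ≤ R := by
    refine ⟨2 * |M| + 1, by positivity, fun x hx y hy => ?_⟩
    have h1 := norm_sub_le y x
    have h2 := hM x hx
    have h3 := hM y hy
    have h4 := le_abs_self M
    linarith
  obtain ⟨η, hη, hunif⟩ := Metric.uniformContinuousOn_iff.1
    (hDcomp.uniformContinuousOn_of_continuous hf') ((1 - β) * c / R)
    (div_pos (mul_pos (by linarith) hc) hR)
  refine ⟨η / (2 * R), by positivity, fun x hx y hy t ht ht1 htδ hg => ?_⟩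
  have hxt : x + t • (y - x) ∈ D := hDconv.add_smul_sub_mem hx hy ⟨ht.le, ht1⟩
  obtain ⟨z, hz, hzeq⟩ := domain_mvt
    (fun w hw => (hf w hw).hasFDerivAt.hasFDerivWithinAt) hDconv hx hxt
  have hzD : z ∈ D := hDconv.segment_subset hx hxt hz
  have htd : ‖t • (y - x)‖ < η := by
    rw [norm_smul, Real.norm_of_nonneg ht.le]
    calc t * ‖y - x‖ ≤ η / (2 * R) * R := by
          gcongr
          exact hdR x hx y hy
      _ = η / 2 := by field_simp
      _ < η := by linarith
  have hzx : dist z x < η := by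
    rw [segment_eq_image'] at hz
    obtain ⟨s, ⟨hs0, hs1⟩, rfl⟩ := hz
    simp only [dist_eq_norm, add_sub_cancel_left]
    rw [norm_smul, Real.norm_of_nonneg hs0]
    exact (mul_le_of_le_one_left (norm_nonneg _) hs1).trans_lt htd
  have hclose := hunif z hzD x hx hzx
  rw [dist_eq_norm] at hclose
  -- The slope at the intermediate point `z` is within `(1 - β) c` of the slope at `x`.
  have hinner : ⟪f' z - f' x, y - x⟫ ≤ (1 - β) * c :=
    calc ⟪f' z - f' x, y - x⟫ ≤ ‖f' z - f' x‖ * ‖y - x‖ := real_inner_le_norm _ _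
      _ ≤ (1 - β) * c / R * R := by
          gcongr
          exact hdR x hx y hy
      _ = (1 - β) * c := by field_simp
  rw [inner_sub_left] at hinner
  simp only [InnerProductSpace.toDual_apply_apply, add_sub_cancel_left, inner_smul_right] at hzeq
  have hslope : ⟪f' z, y - x⟫ ≤ β * ⟪f' x, y - x⟫ := by nlinarith
  have := mul_le_mul_of_nonneg_left hslope ht.le
  linarith

/-- Let `{x^k}` be generated by the conditional gradient method with Armijo
rule: `x⁰ ∈ D`; for each `k`, `y^k ∈ Z(x^k)`, `d^k = y^k − x^k` with `⟪f'(x^k), d^k⟫ < 0`,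
`λ_k = θ^{m_k}` where `m_k` is the smallest `m ∈ ℤ₊` with
`f(x^k + θ^m d^k) ≤ f(x^k) + β θ^m ⟪f'(x^k), d^k⟫`, and `x^{k+1} = x^k + λ_k d^k`, where
`β, θ ∈ (0,1)`.  Then `{x^k}` has limit points and every limit point of `{x^k}`
belongs to `D⁰`. -/
theorem stmt_5 {n : ℕ} (D : Set (EuclideanSpace ℝ (Fin n)))
    (hDne : D.Nonempty) (hDconv : Convex ℝ D) (hDcl : IsClosed D)
    (hDbd : Bornology.IsBounded D)
    (f : EuclideanSpace ℝ (Fin n) → ℝ)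
    (f' : EuclideanSpace ℝ (Fin n) → EuclideanSpace ℝ (Fin n))
    (hf : ∀ x ∈ D, HasGradientAt f (f' x) x)
    (hf' : ContinuousOn f' D)
    (β θ : ℝ) (hβ : β ∈ Set.Ioo (0 : ℝ) 1) (hθ : θ ∈ Set.Ioo (0 : ℝ) 1)
    (x y : ℕ → EuclideanSpace ℝ (Fin n)) (lam : ℕ → ℝ) (m : ℕ → ℕ)
    (hx0 : x 0 ∈ D)
    (hy : ∀ k, y k ∈ D ∧ ∀ w ∈ D, ⟪f' (x k), y k⟫ ≤ ⟪f' (x k), w⟫)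
    (hdesc : ∀ k, ⟪f' (x k), y k - x k⟫ < 0)
    (harm : ∀ k, f (x k + θ ^ m k • (y k - x k)) ≤
      f (x k) + β * θ ^ m k * ⟪f' (x k), y k - x k⟫)
    (hmmin : ∀ k, ∀ j < m k, ¬ (f (x k + θ ^ j • (y k - x k)) ≤
      f (x k) + β * θ ^ j * ⟪f' (x k), y k - x k⟫))
    (hlam : ∀ k, lam k = θ ^ m k)
    (hstep : ∀ k, x (k + 1) = x k + lam k • (y k - x k)) :
    (∃ x' : EuclideanSpace ℝ (Fin n), ∃ φ : ℕ → ℕ, StrictMono φ ∧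
        Tendsto (x ∘ φ) atTop (nhds x')) ∧
    (∀ (x' : EuclideanSpace ℝ (Fin n)) (φ : ℕ → ℕ), StrictMono φ →
        Tendsto (x ∘ φ) atTop (nhds x') →
        x' ∈ D ∧ ∀ u ∈ D, 0 ≤ ⟪f' x', u - x'⟫) := by
  obtain ⟨hβ0, hβ1⟩ := hβ
  obtain ⟨hθ0, hθ1⟩ := hθ
  have hDcomp : IsCompact D := Metric.isCompact_of_isClosed_isBounded hDcl hDbd
  have hpow1 : ∀ j, θ ^ j ≤ 1 := fun j => pow_le_one₀ hθ0.le hθ1.le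
  have hxD : ∀ k, x k ∈ D := by
    intro k
    induction k with
    | zero => exact hx0
    | succ k ih =>
      rw [hstep, hlam]
      exact hDconv.add_smul_sub_mem ih (hy k).1 ⟨by positivity, hpow1 _⟩
  have hdec : ∀ k, f (x (k + 1)) ≤ f (x k) + β * θ ^ m k * ⟪f' (x k), y k - x k⟫ := by
    intro k
    rw [hstep, hlam]
    exact harm k
  have hanti : Antitone fun k => f (x k) := antitone_nat_of_succ_le fun k => by
    have h1 := hdec k
    have h2 : 0 < β * θ ^ m k := by positivity
    have h3 := mul_neg_of_pos_of_neg h2 (hdesc k)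
    linarith
  have hfcont : ContinuousOn f D := fun w hw => (hf w hw).continuousAt.continuousWithinAt
  have hbdd : BddBelow (Set.range fun k => f (x k)) :=
    (hDcomp.bddBelow_image hfcont).mono (by
      rintro _ ⟨k, rfl⟩
      exact ⟨x k, hxD k, rfl⟩)
  have hlim := tendsto_atTop_ciInf hanti hbdd
  have hdiff : Tendsto (fun k => f (x k) - f (x (k + 1))) atTop (nhds 0) := by
    simpa using hlim.sub (hlim.comp (tendsto_add_atTop_nat 1))
  have hg : ∀ c > 0, ∀ᶠ k in atTop, -c < ⟪f' (x k), y k - x k⟫ := by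
    intro c hc
    obtain ⟨δ, hδ, harmijo⟩ := armijo_of_small_step hDconv hDcomp hf hf' hβ1 hc
    have hτ : 0 < min 1 (θ * δ) := by positivity
    filter_upwards [hdiff.eventually_lt_const (show 0 < β * min 1 (θ * δ) * c by positivity)]
      with k hk
    by_contra! hgk
    have hstepsize : min 1 (θ * δ) ≤ θ ^ m k := by
      rcases Nat.eq_zero_or_pos (m k) with h0 | hpos
      · simp [h0]
      · -- The rejected step `θ ^ (m k - 1)` must exceed `δ`.
        have hrej : δ < θ ^ (m k - 1) := by
          by_contra! hle
          exact hmmin k (m k - 1) (by omega)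
            (harmijo (x k) (hxD k) (y k) (hy k).1 _ (by positivity) (hpow1 _) hle hgk)
        calc min 1 (θ * δ) ≤ θ * δ := min_le_right _ _
          _ ≤ θ * θ ^ (m k - 1) := by gcongr
          _ = θ ^ m k := by rw [← pow_succ', Nat.sub_add_cancel hpos]
    have h1 : β * min 1 (θ * δ) * c ≤ β * θ ^ m k * -⟪f' (x k), y k - x k⟫ := by
      gcongr
      linarith
    have h2 := hdec k
    linarith
  refine ⟨?_, fun x' φ hφ hx' => ?_⟩
  · obtain ⟨a, -, φ, hφ, ha⟩ := hDcomp.tendsto_subseq hxD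
    exact ⟨a, φ, hφ, ha⟩
  · have hx'D : x' ∈ D := hDcl.mem_of_tendsto hx' (Eventually.of_forall fun k => hxD _)
    refine ⟨hx'D, fun u hu => ?_⟩
    have hf'lim : Tendsto (fun k => f' (x (φ k))) atTop (nhds (f' x')) :=
      (hf' x' hx'D).tendsto.comp
        (tendsto_nhdsWithin_iff.2 ⟨hx', Eventually.of_forall fun k => hxD _⟩)
    have hlim' : Tendsto (fun k => ⟪f' (x (φ k)), u - x (φ k)⟫) atTop
        (nhds ⟪f' x', u - x'⟫) :=
      hf'lim.inner (tendsto_const_nhds.sub hx')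
    refine le_of_forall_pos_le_add fun c hc => ?_
    have hge : -c ≤ ⟪f' x', u - x'⟫ := by
      refine ge_of_tendsto hlim' ?_
      filter_upwards [hφ.tendsto_atTop.eventually (hg c hc)] with k hk
      have h1 := (hy (φ k)).2 u hu
      rw [inner_sub_right] at hk ⊢
      linarith
    linarith
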